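/- Suppose a is contained in the Jacobson radical of R and M is an a-relative surjective Buchsbaum R-module with cd(a,M) = ara(a,M). Then M is a-relative Buchsbaum. -/

import Mathlib

/-!
Formalization of a statement from "A theory of relative generalized Cohen-Macaulay modules"
by Divaani-Aazar, Ghanbari Doust, Tousi and Zakeri.

Throughout, `R` is a commutative Noetherian ring and `M` a finitely generated `R`-module.
Conventions used below:
* `locH I i M` is the local cohomology module `H^i_I(M)` (Mathlib's `localCohomology`).
* Conditions `cd(I,M) = c`, `ara(I,M) = n`, `f_I(M) = f`, `grade(I,M) = r` are expressed by
  the predicates `IsCd`, `IsAra`, `IsFinDim`, `IsGrade`.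
* Sequences are given as functions `Fin r → R`; `pSpan M x i = ⟨x_0,…,x_{i-1}⟩M`.
* Koszul (co)homology is defined via the explicit (co)chain complex on the `p`-element
  subsets of `{0,…,n-1}`, and the canonical map `λ^i` into local cohomology is the structure
  map (at exponent 1) into the direct limit of Koszul cohomologies of powers of the sequence,
  which is the realization of `H^i_{⟨x⟩}(M)` used in the paper (2.1(iv)).
-/

open CategoryTheory

noncomputable section

variable {R : Type} [CommRing R]

/-! ### Sequences: prefix spans, weak sequences, filter regular sequences, d-sequences -/

/-- `pSpan M x i` is the submodule `⟨x_0, …, x_{i-1}⟩M` of `M`. -/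
def pSpan (M : Type) [AddCommGroup M] [Module R M] {r : ℕ} (x : Fin r → R) (i : Fin r) :
    Submodule R M :=
  Ideal.span (x '' {j | j < i}) • (⊤ : Submodule R M)

/-- `x_1, …, x_r` is an `I`-weak sequence on `M`:
`(⟨x_1,…,x_{i-1}⟩M :_M x_i) ⊆ (⟨x_1,…,x_{i-1}⟩M :_M I)` for all `i`. -/
def IsWeakSeq (I : Ideal R) (M : Type) [AddCommGroup M] [Module R M] {r : ℕ}
    (x : Fin r → R) : Prop :=
  ∀ i : Fin r, ∀ m : M, x i • m ∈ pSpan M x i → ∀ a ∈ I, a • m ∈ pSpan M x i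

/-- `x_1, …, x_r` is an `I`-filter regular sequence on `M`:
`(⟨x_1,…,x_{i-1}⟩M :_M x_i) ⊆ ⋃ₜ (⟨x_1,…,x_{i-1}⟩M :_M I^t)` for all `i`. -/
def IsFilterRegSeq (I : Ideal R) (M : Type) [AddCommGroup M] [Module R M] {r : ℕ}
    (x : Fin r → R) : Prop :=
  ∀ i : Fin r, ∀ m : M, x i • m ∈ pSpan M x i →
    ∃ t : ℕ, ∀ a ∈ I ^ t, a • m ∈ pSpan M x i

/-- An unconditioned `I`-filter regular sequence: filter regular in any order. -/
def IsUncondFilterRegSeq (I : Ideal R) (M : Type) [AddCommGroup M] [Module R M] {r : ℕ}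
    (x : Fin r → R) : Prop :=
  ∀ σ : Equiv.Perm (Fin r), IsFilterRegSeq I M (x ∘ σ)

/-- An unconditioned `I`-weak sequence: all positive powers, in any order, form an
`I`-weak sequence. -/
def IsUncondWeakSeq (I : Ideal R) (M : Type) [AddCommGroup M] [Module R M] {r : ℕ}
    (x : Fin r → R) : Prop :=
  ∀ σ : Equiv.Perm (Fin r), ∀ α : Fin r → ℕ, (∀ k, 0 < α k) →
    IsWeakSeq I M fun k => x (σ k) ^ α k

/-- `x_1, …, x_r` is a d-sequence on `M`:
`(⟨x_1,…,x_{i-1}⟩M :_M x_i x_j) = (⟨x_1,…,x_{i-1}⟩M :_M x_j)` for all `i ≤ j`. -/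
def IsDSeq (M : Type) [AddCommGroup M] [Module R M] {r : ℕ} (x : Fin r → R) : Prop :=
  ∀ i j : Fin r, i ≤ j → ∀ m : M,
    ((x i * x j) • m ∈ pSpan M x i ↔ x j • m ∈ pSpan M x i)

/-- An u.s.d-sequence on `M`: all positive powers, in any order, form a d-sequence. -/
def IsUSDSeq (M : Type) [AddCommGroup M] [Module R M] {r : ℕ} (x : Fin r → R) : Prop :=
  ∀ σ : Equiv.Perm (Fin r), ∀ α : Fin r → ℕ, (∀ k, 0 < α k) →
    IsDSeq M fun k => x (σ k) ^ α k

/-! ### Local cohomology, cohomological dimension, arithmetic rank -/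

/-- The `i`-th local cohomology module `H^i_I(M)`. -/
abbrev locH (I : Ideal R) (i : ℕ) (M : Type) [AddCommGroup M] [Module R M] : ModuleCat R :=
  (localCohomology I i).obj (ModuleCat.of R M)

/-- `cd(I, M) = c`: the cohomological dimension of `I` on `M` equals `c`, i.e.
`H^c_I(M) ≠ 0` and `H^i_I(M) = 0` for all `i > c`. -/
def IsCd (I : Ideal R) (M : Type) [AddCommGroup M] [Module R M] (c : ℕ) : Prop :=
  Nontrivial (locH I c M) ∧ ∀ i : ℕ, c < i → Subsingleton (locH I i M)

/-- `f_I(M) = f`: the `I`-finiteness dimension of `M` equals `f`, i.e. `f` is the least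
integer such that `H^f_I(M)` is not finitely generated. -/
def IsFinDim (I : Ideal R) (M : Type) [AddCommGroup M] [Module R M] (f : ℕ) : Prop :=
  (∀ i : ℕ, i < f → Module.Finite R (locH I i M)) ∧ ¬ Module.Finite R (locH I f M)

/-- `M` is `I`-relative generalized Cohen-Macaulay: `cd(I,M) ≤ 0` or `cd(I,M) = f_I(M)`. -/
def IsRelGCM (I : Ideal R) (M : Type) [AddCommGroup M] [Module R M] : Prop :=
  (∀ i : ℕ, 0 < i → Subsingleton (locH I i M)) ∨
    ∃ c : ℕ, IsCd I M c ∧ IsFinDim I M c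

/-- `ara(I, M) = n`: the arithmetic rank of `I` with respect to `M` equals `n`, i.e. `n` is the
least integer such that there are `x_1, …, x_n ∈ R` with
`Rad(⟨x_1,…,x_n⟩ + Ann M) = Rad(I + Ann M)`. -/
def IsAra (I : Ideal R) (M : Type) [AddCommGroup M] [Module R M] (n : ℕ) : Prop :=
  IsLeast {k : ℕ | ∃ x : Fin k → R,
    (Ideal.span (Set.range x) + Module.annihilator R M).radical
      = (I + Module.annihilator R M).radical} n

/-- `x_1, …, x_c` is an `I`-relative system of parameters of `M` (where `c = cd(I,M)`):
the `x_i` lie in `I` and `Rad(⟨x_1,…,x_c⟩ + Ann M) = Rad(I + Ann M)`. -/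
def IsRsop (I : Ideal R) (M : Type) [AddCommGroup M] [Module R M] {c : ℕ}
    (x : Fin c → R) : Prop :=
  (∀ j, x j ∈ I) ∧
    (Ideal.span (Set.range x) + Module.annihilator R M).radical
      = (I + Module.annihilator R M).radical

/-! ### Relative Buchsbaum and relative quasi Buchsbaum modules -/

/-- `M` is `I`-relative Buchsbaum: `cd(I,M) = ara(I,M)` and every `I`-relative system of
parameters of `M` is an `I`-weak sequence on `M`. -/
def IsRelBuchsbaum (I : Ideal R) (M : Type) [AddCommGroup M] [Module R M] : Prop :=
  ∃ c : ℕ, IsCd I M c ∧ IsAra I M c ∧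
    ∀ x : Fin c → R, IsRsop I M x → IsWeakSeq I M x

/-- `M` is `I`-relative quasi Buchsbaum: `cd(I,M) = ara(I,M)` and every `I`-relative system of
parameters of `M` contained in `I²` is an `I`-weak sequence on `M`. -/
def IsRelQuasiBuchsbaum (I : Ideal R) (M : Type) [AddCommGroup M] [Module R M] : Prop :=
  ∃ c : ℕ, IsCd I M c ∧ IsAra I M c ∧
    ∀ x : Fin c → R, IsRsop I M x → (∀ j, x j ∈ I ^ 2) → IsWeakSeq I M x

/-! ### The natural maps `φ^i_M : Ext^i(R/I, M) → H^i_I(M)` and relative surjective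
Buchsbaum modules -/

/-- The `i`-th Ext module `Ext^i_R(R/I, M)`. -/
abbrev extH (I : Ideal R) (i : ℕ) (M : Type) [AddCommGroup M] [Module R M] : ModuleCat R :=
  ((Ext R (ModuleCat R) i).obj (Opposite.op (ModuleCat.of R (R ⧸ I)))).obj (ModuleCat.of R M)

/-- The natural map `φ^i_M : Ext^i_R(R/I, M) → H^i_I(M)`, i.e. the structure map into the
colimit `H^i_I(M) = colim_n Ext^i_R(R/I^n, M)` at `n = 1`. -/
def phi (I : Ideal R) (i : ℕ) (M : Type) [AddCommGroup M] [Module R M] :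
    ((localCohomology.diagram (localCohomology.idealPowersDiagram I) i).obj
        (Opposite.op (Opposite.op (1 : ℕ)))).obj (ModuleCat.of R M) ⟶
      (localCohomology I i).obj (ModuleCat.of R M) :=
  have := localCohomology.hasColimitDiagram.{0, 0} (localCohomology.idealPowersDiagram I) i
  (Limits.colimit.ι (localCohomology.diagram (localCohomology.idealPowersDiagram I) i)
      (Opposite.op (Opposite.op (1 : ℕ)))).app (ModuleCat.of R M)

/-- `φ^i_M` is surjective. -/
def PhiSurj (I : Ideal R) (i : ℕ) (M : Type) [AddCommGroup M] [Module R M] : Prop :=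
  Function.Surjective (phi I i M)

/-- `M` is `I`-relative surjective Buchsbaum: `φ^i_M` is surjective for all `i < cd(I,M)`. -/
def IsRelSurjBuchsbaum (I : Ideal R) (M : Type) [AddCommGroup M] [Module R M] : Prop :=
  ∀ i : ℕ, (∃ j : ℕ, i < j ∧ Nontrivial (locH I j M)) → PhiSurj I i M

/-- `grade(I, M) = r`: `r` is the least integer with `Ext^r_R(R/I, M) ≠ 0`. -/
def IsGrade (I : Ideal R) (M : Type) [AddCommGroup M] [Module R M] (r : ℕ) : Prop :=
  Nontrivial (extH I r M) ∧ ∀ i : ℕ, i < r → Subsingleton (extH I i M)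

/-
Surjectivity of `φ^i_M` says that every class in the direct system `Ext^i(R/I^k, M)` eventually
comes from `Ext^i(R/I, M)`. In degree `0` this forces an element of `M` killed by a power of `I`
to be killed by `I`. If `x ∈ I` and `(0 :_M x) ⊆ (0 :_M I)`, the property passes from `M` to `M/xM`
with one degree lost, by the long exact `Ext` sequences and the vanishing of
`colim_k Ext^{i+1}(R/I^k, T)` for modules `T` killed by a power of `I`. So a system of parameters
is handled one element at a time, and only its first element `x` matters. To see that
`(0 :_M x) ⊆ (0 :_M I)`, prime avoidance replaces another parameter by a filter regular element
`y`; induction on the number of parameters applies to every `M/y^t M`, and Krull's intersection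
theorem brings the conclusion back to `M`.
-/

section FilterRegular

variable {A : Type*} [CommRing A]

/- Coset version of prime avoidance. A prime `p` that is minimal in `S` is treated last: an element
of `J` and of all the other primes of `S`, but not of `p`, corrects the sum inside `p` without
affecting it elsewhere. -/
lemma exists_add_notMem_of_forall_not_le (S : Finset (Ideal A)) (hS : ∀ p ∈ S, p.IsPrime) (x : A)
    (J : Ideal A) (h : ∀ p ∈ S, x ∈ p → ¬ J ≤ p) : ∃ j ∈ J, ∀ p ∈ S, x + j ∉ p := by
  classical
  induction S using Finset.strongInduction with
  | H S ih =>
    rcases S.eq_empty_or_nonempty with rfl | hne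
    · exact ⟨0, J.zero_mem, by simp⟩
    obtain ⟨p, hp, hmin⟩ := S.exists_minimal hne
    obtain ⟨j, hj, havoid⟩ := ih (S.erase p) (Finset.erase_ssubset hp)
      (fun q hq => hS q (Finset.mem_of_mem_erase hq))
      (fun q hq => h q (Finset.mem_of_mem_erase hq))
    by_cases hxp : x + j ∈ p
    · have hJp : ¬ J ≤ p := fun hJ => h p hp ((p.add_mem_iff_left (hJ hj)).1 hxp) hJ
      have hnot : ¬ J ⊓ (S.erase p).inf id ≤ p := by
        rw [(hS p hp).inf_le, (hS p hp).inf_le']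
        rintro (hJ | ⟨q, hq, hqp⟩)
        · exact hJp hJ
        · obtain ⟨hne, hq⟩ := Finset.mem_erase.1 hq
          exact hne (le_antisymm hqp (hmin hq hqp))
      obtain ⟨j', ⟨hj'J, hj'S⟩, hj'p⟩ := SetLike.not_le_iff_exists.1 hnot
      refine ⟨j + j', J.add_mem hj hj'J, fun q hq hmem => ?_⟩
      rw [← add_assoc] at hmem
      by_cases hqp : q = p
      · subst hqp
        exact hj'p ((q.add_mem_iff_right hxp).1 hmem)
      · have hq' := Finset.mem_erase.2 ⟨hqp, hq⟩
        exact havoid q hq' ((q.add_mem_iff_left (Finset.inf_le (f := id) hq' hj'S)).1 hmem)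
    · refine ⟨j, hj, fun q hq => ?_⟩
      by_cases hqp : q = p
      · rwa [hqp]
      · exact havoid q (Finset.mem_erase.2 ⟨hqp, hq⟩)

variable {M : Type*} [AddCommGroup M] [Module A M]

/-- An element is `I`-filter regular on `M` if every associated prime of `M` containing it
contains `I`. -/
def IsFilterRegular (I : Ideal A) (M : Type*) [AddCommGroup M] [Module A M] (y : A) : Prop :=
  ∀ p ∈ associatedPrimes A M, y ∈ p → I ≤ p

lemma exists_add_isFilterRegular [IsNoetherianRing A] [Module.Finite A M] {I J : Ideal A} {x : A}
    (h : I ≤ (Ideal.span {x} ⊔ J ⊔ Module.annihilator A M).radical) :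
    ∃ j ∈ J, IsFilterRegular I M (x + j) := by
  have hfin : {p ∈ associatedPrimes A M | ¬ I ≤ p}.Finite :=
    (associatedPrimes.finite A M).subset (Set.sep_subset _ _)
  obtain ⟨j, hj, havoid⟩ := exists_add_notMem_of_forall_not_le hfin.toFinset
    (fun p hp => (hfin.mem_toFinset.1 hp).1.isPrime) x J fun p hp hx hJ => by
      obtain ⟨hass, hIp⟩ := hfin.mem_toFinset.1 hp
      have hann : Module.annihilator A M ≤ p :=
        Submodule.annihilator_top.symm.trans_le hass.annihilator_le
      exact hIp (h.trans (hass.isPrime.radical_le_iff.2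
        (sup_le (sup_le ((Ideal.span_singleton_le_iff_mem p).2 hx) hJ) hann)))
  refine ⟨j, hj, fun p hp hxj => ?_⟩
  by_contra hIp
  exact havoid p (hfin.mem_toFinset.2 ⟨hp, hIp⟩) hxj

lemma IsFilterRegular.exists_pow_smul_eq_zero [IsNoetherianRing A] {I : Ideal A} {y : A}
    (hy : IsFilterRegular I M y) {t : ℕ} {m : M} (hm : y ^ t • m = 0) :
    ∃ k : ℕ, ∀ a ∈ I ^ k, a • m = 0 := by
  let N := Submodule.span A {m}
  have hyN : y ^ t ∈ N.annihilator := (Submodule.mem_annihilator_span_singleton m _).2 hm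
  have hI : I ≤ N.annihilator.radical := by
    rw [← Ideal.sInf_minimalPrimes]
    refine le_sInf fun p hp => hy p ?_ (hp.isPrime.mem_of_pow_mem t (hp.1.2 hyN))
    exact associatedPrimes.subset_of_injective N.injective_subtype
      (Module.associatedPrimes.minimalPrimes_annihilator_subset_associatedPrimes A N hp)
  obtain ⟨k, hk⟩ := Ideal.exists_pow_le_of_le_radical_of_fg hI (IsNoetherian.noetherian I)
  exact ⟨k, fun a ha => (Submodule.mem_annihilator_span_singleton m a).1 (hk ha)⟩

lemma span_singleton_sup_annihilator_le_annihilator_quotSMulTop (y : A) :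
    Ideal.span {y} ⊔ Module.annihilator A M ≤ Module.annihilator A (QuotSMulTop y M) :=
  sup_le ((Ideal.span_singleton_le_iff_mem _).2 (QuotSMulTop.mem_annihilator M y))
    (LinearMap.annihilator_le_of_surjective _ (Submodule.mkQ_surjective _))

lemma le_radical_sup_annihilator_quotSMulTop {I J : Ideal A} {b j : A} (hj : j ∈ J)
    (h : I ≤ (Ideal.span {b} ⊔ J ⊔ Module.annihilator A M).radical) (t : ℕ) :
    I ≤ (J ⊔ Module.annihilator A (QuotSMulTop ((b + j) ^ t) M)).radical := by
  set B := J ⊔ Module.annihilator A (QuotSMulTop ((b + j) ^ t) M)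
  have hb : b ∈ B.radical := by
    have hsum : b + j ∈ B.radical := ⟨t, Ideal.mem_sup_right (QuotSMulTop.mem_annihilator M _)⟩
    exact (Ideal.add_mem_iff_left _ (Ideal.le_radical (Ideal.mem_sup_left hj))).1 hsum
  have hann : Module.annihilator A M ≤ B :=
    (LinearMap.annihilator_le_of_surjective _ (Submodule.mkQ_surjective _)).trans le_sup_right
  refine h.trans (Ideal.radical_le_radical_iff.2 (sup_le (sup_le ?_ ?_) ?_))
  · exact (Ideal.span_singleton_le_iff_mem _).2 hb
  · exact le_sup_left.trans Ideal.le_radical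
  · exact hann.trans Ideal.le_radical

end FilterRegular

section ExtVanishing

open Abelian

universe u

variable {A : Type u} [CommRing A]

/- Naturality of the connecting morphism: it intertwines restriction along `f.τ₁` with restriction
along `f.τ₃`. -/
lemma mk₀_comp_extClass_comp_eq_zero {C : Type*} [Category* C] [Abelian C] [HasExt C]
    {S' S : ShortComplex C} (hS' : S'.ShortExact) (hS : S.ShortExact) (f : S' ⟶ S) {T : C} {i : ℕ}
    {e : Ext S.X₁ T i} (he : (Ext.mk₀ f.τ₁).comp e (zero_add i) = 0) :
    (Ext.mk₀ f.τ₃).comp (hS.extClass.comp e (add_comm 1 i)) (zero_add _) = 0 := by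
  rw [← Ext.comp_assoc (a₁₂ := 1) _ _ _ (by lia) (by lia) (by lia),
    ← ShortComplex.ShortExact.extClass_naturality hS' hS f,
    Ext.comp_assoc (a₂₃ := i) _ _ _ (by lia) (by lia) (by lia), he, Ext.comp_zero]

lemma mapsTo_ker_of_comp_eq {F L F' L' : Type*} [AddCommGroup F] [Module A F] [AddCommGroup L]
    [Module A L] [AddCommGroup F'] [Module A F'] [AddCommGroup L'] [Module A L']
    {π : F →ₗ[A] L} {π' : F' →ₗ[A] L'} {u : F' →ₗ[A] F} {t : L' →ₗ[A] L}
    (h : π ∘ₗ u = t ∘ₗ π') : ∀ x ∈ π'.ker, u x ∈ π.ker := fun x hx => by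
  rw [LinearMap.mem_ker, ← LinearMap.comp_apply, h, LinearMap.comp_apply, hx, map_zero]

lemma exists_surjective_comp_eq {F L L' : Type u} [AddCommGroup F] [Module A F] [AddCommGroup L]
    [Module A L] [AddCommGroup L'] [Module A L'] {π : F →ₗ[A] L} {t : L' →ₗ[A] L}
    {N : Submodule A F} (ht : ∀ y, t y ∈ N.map π) :
    ∃ (F' : Type u) (_ : AddCommGroup F') (_ : Module A F') (π' : F' →ₗ[A] L') (u : F' →ₗ[A] F),
      Function.Surjective π' ∧ π ∘ₗ u = t ∘ₗ π' ∧ ∀ x, u x ∈ N := by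
  let F' : Submodule A (F × L') :=
    N.comap (LinearMap.fst A F L') ⊓
      LinearMap.eqLocus (π ∘ₗ LinearMap.fst A F L') (t ∘ₗ LinearMap.snd A F L')
  refine ⟨F', inferInstance, inferInstance, LinearMap.snd A F L' ∘ₗ F'.subtype,
    LinearMap.fst A F L' ∘ₗ F'.subtype, fun y => ?_, LinearMap.ext fun x => x.2.2, fun x => x.2.1⟩
  obtain ⟨x, hx, hxy⟩ := ht y
  exact ⟨⟨(x, y), hx, hxy⟩, rfl⟩

lemma exists_ext_ker_of_projective {F L : Type u} [AddCommGroup F] [Module A F] [AddCommGroup L]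
    [Module A L] [Projective (ModuleCat.of A F)] {π : F →ₗ[A] L} (hπ : Function.Surjective π)
    {T : ModuleCat.{u} A} {i : ℕ} (e : Ext (ModuleCat.of A L) T (i + 1)) :
    ∃ e' : Ext (ModuleCat.of A π.ker) T i,
      ∀ {F' L' : Type u} [AddCommGroup F'] [Module A F'] [AddCommGroup L'] [Module A L']
        {π' : F' →ₗ[A] L'} (_ : Function.Surjective π') {u : F' →ₗ[A] F} {t : L' →ₗ[A] L}
        (hut : π ∘ₗ u = t ∘ₗ π'),
        (Ext.mk₀ (ModuleCat.ofHom (u.restrict (mapsTo_ker_of_comp_eq hut)))).comp e' (zero_add i)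
          = 0 → (Ext.mk₀ (ModuleCat.ofHom t)).comp e (zero_add (i + 1)) = 0 := by
  have hS := LinearMap.shortExact_shortComplexKer hπ
  obtain ⟨e', rfl⟩ := Ext.contravariant_sequence_exact₃ hS _ e (Ext.eq_zero_of_projective _)
    (add_comm 1 i)
  refine ⟨e', fun {F' L'} _ _ _ _ π' hπ' u t hut he' => ?_⟩
  let f : π'.shortComplexKer ⟶ π.shortComplexKer :=
    { τ₁ := ModuleCat.ofHom (u.restrict (mapsTo_ker_of_comp_eq hut))
      τ₂ := ModuleCat.ofHom u
      τ₃ := ModuleCat.ofHom t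
      comm₁₂ := rfl
      comm₂₃ := ModuleCat.hom_ext hut }
  exact mk₀_comp_extClass_comp_eq_zero (LinearMap.shortExact_shortComplexKer hπ') hS f he'

lemma exists_pow_smul_inf_le [IsNoetherianRing A] (I : Ideal A) {F : Type*} [AddCommGroup F]
    [Module A F] [Module.Finite A F] (K : Submodule A F) (s : ℕ) :
    ∃ r, I ^ r • ⊤ ⊓ K ≤ I ^ s • K := by
  obtain ⟨k, hk⟩ := Ideal.exists_pow_inf_eq_pow_smul I K
  refine ⟨s + k, ?_⟩
  rw [hk (s + k) (by lia), Nat.add_sub_cancel]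
  exact Submodule.smul_mono le_rfl inf_le_right

/- By dimension shifting; the Artin–Rees lemma keeps the induced maps between the kernels of the
free presentations small. -/
lemma exists_forall_mk₀_comp_eq_zero [IsNoetherianRing A] {I : Ideal A} {T : ModuleCat.{u} A}
    {n : ℕ} (hT : I ^ n ≤ Module.annihilator A T) (i : ℕ) {L : Type u} [AddCommGroup L]
    [Module A L] [Module.Finite A L] (e : Ext (ModuleCat.of A L) T i) :
    ∃ s : ℕ, ∀ {L' : Type u} [AddCommGroup L'] [Module A L'] (t : L' →ₗ[A] L),
      (∀ x, t x ∈ I ^ s • (⊤ : Submodule A L)) →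
        (Ext.mk₀ (ModuleCat.ofHom t)).comp e (zero_add i) = 0 := by
  induction i generalizing L with
  | zero =>
    obtain ⟨f, rfl⟩ := (Ext.mk₀_bijective _ _).2 e
    refine ⟨n, fun t ht => ?_⟩
    have hker : I ^ n • (⊤ : Submodule A L) ≤ f.hom.ker := Submodule.smul_le.2 fun a ha x _ => by
      rw [LinearMap.mem_ker, map_smul, Module.mem_annihilator.1 (hT ha)]
    have hzero : ModuleCat.ofHom t ≫ f = 0 := by
      ext x
      exact hker (ht x)
    rw [Ext.mk₀_comp_mk₀, hzero, Ext.mk₀_zero]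
  | succ i ih =>
    obtain ⟨m, π, hπ⟩ := Module.Finite.exists_fin' A L
    obtain ⟨e', he'⟩ := exists_ext_ker_of_projective hπ e
    obtain ⟨s, hs⟩ := ih e'
    obtain ⟨r, hr⟩ := exists_pow_smul_inf_le I π.ker s
    refine ⟨r, fun {L'} _ _ t ht => ?_⟩
    obtain ⟨F', _, _, π', u, hπ', hut, hu⟩ := exists_surjective_comp_eq (π := π) (t := t)
      (N := I ^ r • ⊤) fun y => by
        rw [Submodule.map_smul'', Submodule.map_top, LinearMap.range_eq_top.2 hπ]
        exact ht y
    refine he' hπ' hut (hs _ fun x => ?_)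
    rw [Submodule.mem_smul_top_iff]
    exact hr ⟨hu x, mapsTo_ker_of_comp_eq hut x x.2⟩

end ExtVanishing

section PowerQuotients

open Abelian

universe u

variable {A : Type u} [CommRing A]

/-- The module `A ⧸ I ^ k`, as an object of `ModuleCat A`. -/
abbrev quotPow (I : Ideal A) (k : ℕ) : ModuleCat.{u} A := ModuleCat.of A (A ⧸ I ^ k)

/-- The projection `A ⧸ I ^ l ⟶ A ⧸ I ^ k` for `k ≤ l`. -/
abbrev quotPowMap (I : Ideal A) {k l : ℕ} (h : k ≤ l) : quotPow I l ⟶ quotPow I k :=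
  ModuleCat.ofHom (Submodule.factor (Ideal.pow_le_pow_right h))

/-- The transition map `Ext^i(A ⧸ I ^ k, M) → Ext^i(A ⧸ I ^ l, M)`, for `k ≤ l`, of the direct
system whose colimit is local cohomology. -/
def extRes (I : Ideal A) {k l : ℕ} (h : k ≤ l) {M : ModuleCat.{u} A} {i : ℕ}
    (e : Ext (quotPow I k) M i) : Ext (quotPow I l) M i :=
  (Ext.mk₀ (quotPowMap I h)).comp e (zero_add i)

/-- Every class of the direct system `Ext^i(A ⧸ I ^ k, M)` eventually agrees with one coming from
`k = 1`; equivalently, `Ext^i(A ⧸ I, M)` surjects onto the colimit of the system. -/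
def ExtColimitSurjective (I : Ideal A) (M : ModuleCat.{u} A) (i : ℕ) : Prop :=
  ∀ (k : ℕ) (e : Ext (quotPow I k) M i), ∃ (l : ℕ) (hk : k ≤ l) (h1 : 1 ≤ l)
    (e₁ : Ext (quotPow I 1) M i), extRes I hk e = extRes I h1 e₁

variable {I : Ideal A} {k l m : ℕ} {M N : ModuleCat.{u} A} {i j n : ℕ}

lemma extRes_add (h : k ≤ l) (e e' : Ext (quotPow I k) M i) :
    extRes I h (e + e') = extRes I h e + extRes I h e' :=
  Ext.comp_add _ _ _ _

lemma extRes_sub (h : k ≤ l) (e e' : Ext (quotPow I k) M i) :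
    extRes I h (e - e') = extRes I h e - extRes I h e' :=
  map_sub ((Ext.mk₀ (quotPowMap I h)).precomp M (zero_add i)) e e'

lemma extRes_extRes (h : k ≤ l) (h' : l ≤ m) (e : Ext (quotPow I k) M i) :
    extRes I h' (extRes I h e) = extRes I (h.trans h') e := by
  have hcomp : quotPowMap I h' ≫ quotPowMap I h = quotPowMap I (h.trans h') := by
    ext
    rfl
  rw [extRes, extRes, ← Ext.comp_assoc (a₁₂ := 0) _ _ _ (by lia) (by lia) (by lia),
    Ext.mk₀_comp_mk₀, hcomp, extRes]

lemma extRes_comp (h : k ≤ l) (e : Ext (quotPow I k) M i) (f : Ext M N j) (hn : i + j = n) :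
    extRes I h (e.comp f hn) = (extRes I h e).comp f hn :=
  (Ext.comp_assoc (a₂₃ := n) _ _ _ (by lia) (by lia) (by lia)).symm

lemma exists_extRes_eq_zero [IsNoetherianRing A] (hM : I ^ n ≤ Module.annihilator A M)
    (e : Ext (quotPow I k) M (i + 1)) : ∃ (l : ℕ) (h : k ≤ l), extRes I h e = 0 := by
  obtain ⟨e', he'⟩ := exists_ext_ker_of_projective (I ^ k).mkQ_surjective e
  obtain ⟨s, hs⟩ := exists_forall_mk₀_comp_eq_zero hM i e'
  have hmap : (I ^ k).mkQ ∘ₗ LinearMap.id =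
      Submodule.factor (Ideal.pow_le_pow_right (Nat.le_add_left k s)) ∘ₗ (I ^ (s + k)).mkQ := rfl
  refine ⟨s + k, Nat.le_add_left k s, he' (I ^ (s + k)).mkQ_surjective hmap (hs _ fun x => ?_)⟩
  have hx : (x : A) ∈ I ^ s • (I ^ k).mkQ.ker := by
    rw [Submodule.ker_mkQ, smul_eq_mul, ← pow_add]
    exact (Submodule.ker_mkQ (I ^ (s + k))).le x.2
  exact (Submodule.mem_smul_top_iff _ _ _).2 hx

lemma comp_mk₀_lsmul_eq_zero {x : A} (hx : x ∈ I) {M : Type u} [AddCommGroup M] [Module A M]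
    (e : Ext (quotPow I 1) (ModuleCat.of A M) i) :
    e.comp (Ext.mk₀ (ModuleCat.ofHom (LinearMap.lsmul A M x))) (add_zero i) = 0 := by
  have hlsmul : ModuleCat.ofHom (LinearMap.lsmul A M x) = x • 𝟙 (ModuleCat.of A M) := rfl
  have hquot : x • 𝟙 (quotPow I 1) = 0 := by
    have hann : x ∈ Module.annihilator A (A ⧸ I ^ 1) := by
      rwa [Ideal.annihilator_quotient, pow_one]
    ext
    exact Module.mem_annihilator.1 hann 1
  calc e.comp (Ext.mk₀ (ModuleCat.ofHom (LinearMap.lsmul A M x))) (add_zero i)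
      = x • e := by rw [hlsmul, Ext.mk₀_smul, Ext.comp_smul, Ext.comp_mk₀_id]
    _ = (Ext.mk₀ (x • 𝟙 (quotPow I 1))).comp e (zero_add i) := by
      rw [Ext.mk₀_smul, Ext.smul_comp, Ext.mk₀_id_comp]
    _ = 0 := by rw [hquot, Ext.mk₀_zero, Ext.zero_comp]

end PowerQuotients

section ExtComparison

open Limits Opposite

universe v

variable {A : Type*} [Ring A] {C : Type*} [Category.{v} C] [Abelian C] [Linear A C]

/-- The cochain map `Hom(L, Y) ⟶ Hom(K, Y)` induced by a chain map `K ⟶ L`. -/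
def linearYonedaObjMap (A : Type*) [Ring A] [Linear A C] {K L : ChainComplex C ℕ} (ψ : K ⟶ L)
    (Y : C) : L.linearYonedaObj A Y ⟶ K.linearYonedaObj A Y :=
  (HomologicalComplex.unopFunctor _ _).map
    ((((linearYoneda A C).obj Y).rightOp.mapHomologicalComplex _).map ψ).op

lemma exists_d_eq_iCycles (K : CochainComplex (ModuleCat.{v} A) ℕ) {m n : ℕ}
    (hm : (ComplexShape.up ℕ).prev n = m) {z : K.cycles n} (hz : K.homologyπ n z = 0) :
    ∃ u, K.d m n u = K.iCycles n z := by
  have hexact := ShortComplex.exact_of_g_is_cokernel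
    (ShortComplex.mk (K.toCycles m n) (K.homologyπ n) (K.toCycles_comp_homologyπ _ _))
    (K.homologyIsCokernel m n hm)
  obtain ⟨u, rfl⟩ := (ShortComplex.moduleCat_exact_iff _).1 hexact z hz
  exact ⟨u, (congr((ModuleCat.Hom.hom $(K.toCycles_i m n)) u)).symm⟩

variable {X X' : C}

section Cocycles

variable (P : ProjectiveResolution X) {Y : C} {n : ℕ}

/-- The morphism `Pₙ ⟶ Y` underlying a cocycle of `Hom(P, Y)`. -/
def cocycleHom (z : (P.complex.linearYonedaObj A Y).cycles n) : P.complex.X n ⟶ Y :=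
  (P.complex.linearYonedaObj A Y).iCycles n z

lemma d_comp_cocycleHom (z : (P.complex.linearYonedaObj A Y).cycles n) :
    P.complex.d (n + 1) n ≫ cocycleHom P z = 0 :=
  congr((ModuleCat.Hom.hom $((P.complex.linearYonedaObj A Y).iCycles_d n (n + 1))) z)

lemma cocycleHom_sub (z w : (P.complex.linearYonedaObj A Y).cycles n) :
    cocycleHom P (z - w) = cocycleHom P z - cocycleHom P w :=
  map_sub ((P.complex.linearYonedaObj A Y).iCycles n).hom z w

lemma cocycleHom_cyclesMap (P' : ProjectiveResolution X') (ψ : P'.complex ⟶ P.complex)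
    (z : (P.complex.linearYonedaObj A Y).cycles n) :
    cocycleHom P' (HomologicalComplex.cyclesMap (linearYonedaObjMap A ψ Y) n z) =
      ψ.f n ≫ cocycleHom P z :=
  congr((ModuleCat.Hom.hom $(HomologicalComplex.cyclesMap_i (linearYonedaObjMap A ψ Y) n)) z)

variable [HasExt C]

/-- The class of a cocycle of `Hom(P, Y)` in `CategoryTheory.Abelian.Ext X Y n`. -/
def abelianExtClass (z : (P.complex.linearYonedaObj A Y).cycles n) : Abelian.Ext X Y n :=
  P.extMk (cocycleHom P z) (n + 1) rfl (d_comp_cocycleHom P z)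

lemma abelianExtClass_sub (z w : (P.complex.linearYonedaObj A Y).cycles n) :
    abelianExtClass P (z - w) = abelianExtClass P z - abelianExtClass P w := by
  simp only [abelianExtClass, P.sub_extMk, cocycleHom_sub]

lemma abelianExtClass_surjective :
    Function.Surjective (abelianExtClass (A := A) P (Y := Y) (n := n)) := fun e => by
  obtain ⟨f, hf, rfl⟩ := P.extMk_surjective e (n + 1) rfl
  let K := P.complex.linearYonedaObj A Y
  have hnext : (ComplexShape.up ℕ).next n = n + 1 := CochainComplex.next ℕ n
  let z := K.cyclesMk (i := n) (f : P.complex.X n ⟶ Y) (n + 1) hnext hf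
  have hz : cocycleHom P z = f := K.i_cyclesMk _ _ _ _
  exact ⟨z, by simp only [abelianExtClass, hz]⟩

lemma abelianExtClass_eq_zero {z : (P.complex.linearYonedaObj A Y).cycles n}
    (hz : (P.complex.linearYonedaObj A Y).homologyπ n z = 0) : abelianExtClass P z = 0 := by
  let K := P.complex.linearYonedaObj A Y
  cases n with
  | zero =>
    obtain ⟨u, hu⟩ := exists_d_eq_iCycles K CochainComplex.prev_nat_zero hz
    have hzero : cocycleHom P z = 0 :=
      hu.symm.trans congr((ModuleCat.Hom.hom $(K.shape 0 0 (by simp))) u)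
    simp only [abelianExtClass, hzero, P.extMk_zero]
  | succ p =>
    exact (P.extMk_eq_zero_iff _ _ _ _ p rfl).2
      (exists_d_eq_iCycles K (CochainComplex.prev_nat_succ p) hz)

end Cocycles

variable [EnoughProjectives C]

lemma isoExt_hom_naturality (P : ProjectiveResolution X) (P' : ProjectiveResolution X')
    (g : X' ⟶ X) (ψ : P'.complex ⟶ P.complex) (comm : ψ.f 0 ≫ P.π.f 0 = P'.π.f 0 ≫ g) (Y : C)
    (n : ℕ) :
    ((_root_.Ext A C n).map g.op).app Y ≫ (P'.isoExt n Y).hom =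
      (P.isoExt n Y).hom ≫ HomologicalComplex.homologyMap (linearYonedaObjMap A ψ Y) n := by
  have hderived : CommSq
      (P'.isoLeftDerivedObj ((linearYoneda A C).obj Y).rightOp n).inv
      (HomologicalComplex.homologyMap
        ((HomologicalComplex.opFunctor _ _).map (linearYonedaObjMap A ψ Y).op) n)
      ((((linearYoneda A C).obj Y).rightOp.leftDerived n).map g)
      (P.isoLeftDerivedObj ((linearYoneda A C).obj Y).rightOp n).inv :=
    ⟨P'.isoLeftDerivedObj_inv_naturality g P ψ comm _ n⟩
  have hop : CommSq
      ((P'.complex.linearYonedaObj A Y).homologyOp n).hom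
      (HomologicalComplex.homologyMap
        ((HomologicalComplex.opFunctor _ _).map (linearYonedaObjMap A ψ Y).op) n)
      (HomologicalComplex.homologyMap (linearYonedaObjMap A ψ Y) n).op
      ((P.complex.linearYonedaObj A Y).homologyOp n).hom :=
    ⟨(HomologicalComplex.homologyOp_hom_naturality (linearYonedaObjMap A ψ Y) n).symm⟩
  exact congrArg Quiver.Hom.unop (hop.horiz_inv.horiz_comp hderived).w

/-- The class of a cocycle of `Hom(P, Y)` in `Ext A C n`, the left derived functor of
`Hom(-, Y)`. -/
def derivedExtClass (P : ProjectiveResolution X) {Y : C} {n : ℕ}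
    (z : (P.complex.linearYonedaObj A Y).cycles n) :
    ((_root_.Ext A C n).obj (op X)).obj Y :=
  (P.isoExt n Y).inv ((P.complex.linearYonedaObj A Y).homologyπ n z)

lemma derivedExtClass_surjective (P : ProjectiveResolution X) {Y : C} {n : ℕ} :
    Function.Surjective (derivedExtClass (A := A) P (Y := Y) (n := n)) :=
  ((ModuleCat.epi_iff_surjective _).1 inferInstance).comp
    ((ModuleCat.epi_iff_surjective ((P.complex.linearYonedaObj A Y).homologyπ n)).1 inferInstance)

lemma map_derivedExtClass (P : ProjectiveResolution X) (P' : ProjectiveResolution X')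
    (g : X' ⟶ X) (ψ : P'.complex ⟶ P.complex) (comm : ψ.f 0 ≫ P.π.f 0 = P'.π.f 0 ≫ g) {Y : C}
    {n : ℕ} (z : (P.complex.linearYonedaObj A Y).cycles n) :
    ((_root_.Ext A C n).map g.op).app Y (derivedExtClass P z) =
      derivedExtClass P' (HomologicalComplex.cyclesMap (linearYonedaObjMap A ψ Y) n z) := by
  have hinv : (P.isoExt n Y).inv ≫ ((_root_.Ext A C n).map g.op).app Y =
      HomologicalComplex.homologyMap (linearYonedaObjMap A ψ Y) n ≫ (P'.isoExt n Y).inv := by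
    rw [Iso.inv_comp_eq, ← Category.assoc, Iso.eq_comp_inv]
    exact isoExt_hom_naturality P P' g ψ comm Y n
  have hcycles : (P.complex.linearYonedaObj A Y).homologyπ n ≫ (P.isoExt n Y).inv ≫
      ((_root_.Ext A C n).map g.op).app Y =
        HomologicalComplex.cyclesMap (linearYonedaObjMap A ψ Y) n ≫
          (P'.complex.linearYonedaObj A Y).homologyπ n ≫ (P'.isoExt n Y).inv := by
    rw [hinv, ← Category.assoc, HomologicalComplex.homologyπ_naturality, Category.assoc]
  exact congr((ModuleCat.Hom.hom $hcycles) z)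

variable [HasExt C]

/-- A comparison map from the left derived functor of `Hom(-, Y)` to `CategoryTheory.Abelian.Ext`:
the class of a cocycle is sent to the class of the same cocycle. -/
def toAbelianExt (P : ProjectiveResolution X) {Y : C} {n : ℕ}
    (e : ((_root_.Ext A C n).obj (op X)).obj Y) : Abelian.Ext X Y n :=
  abelianExtClass P (Function.surjInv (derivedExtClass_surjective P) e)

lemma toAbelianExt_derivedExtClass (P : ProjectiveResolution X) {Y : C} {n : ℕ}
    (z : (P.complex.linearYonedaObj A Y).cycles n) :
    toAbelianExt P (derivedExtClass P z) = abelianExtClass P z := by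
  set w := Function.surjInv (derivedExtClass_surjective P) (derivedExtClass P z) with hw
  have hinj : Function.Injective (P.isoExt (R := A) n Y).inv :=
    (ModuleCat.mono_iff_injective _).1 inferInstance
  have hπ : (P.complex.linearYonedaObj A Y).homologyπ n w =
      (P.complex.linearYonedaObj A Y).homologyπ n z :=
    hinj (Function.surjInv_eq (derivedExtClass_surjective P) _)
  rw [← sub_eq_zero, toAbelianExt, ← hw, ← abelianExtClass_sub]
  exact abelianExtClass_eq_zero P (by rw [map_sub, hπ, sub_self])

lemma toAbelianExt_surjective (P : ProjectiveResolution X) {Y : C} {n : ℕ} :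
    Function.Surjective (toAbelianExt (A := A) P (Y := Y) (n := n)) := fun e =>
  have ⟨z, hz⟩ := abelianExtClass_surjective P e
  ⟨derivedExtClass P z, by rw [toAbelianExt_derivedExtClass, hz]⟩

lemma toAbelianExt_map (P : ProjectiveResolution X) (P' : ProjectiveResolution X')
    (g : X' ⟶ X) {Y : C} {n : ℕ} (e : ((_root_.Ext A C n).obj (op X)).obj Y) :
    toAbelianExt P' (((_root_.Ext A C n).map g.op).app Y e) =
      (Abelian.Ext.mk₀ g).comp (toAbelianExt P e) (zero_add n) := by
  obtain ⟨z, rfl⟩ := derivedExtClass_surjective P e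
  let ψ := ProjectiveResolution.lift g P' P
  have comm : ψ.f 0 ≫ P.π.f 0 = P'.π.f 0 ≫ g := ProjectiveResolution.lift_commutes_zero g P' P
  rw [map_derivedExtClass P P' g ψ comm, toAbelianExt_derivedExtClass,
    toAbelianExt_derivedExtClass, abelianExtClass, abelianExtClass,
    P.mk₀_comp_extMk _ _ _ _ (φ := ⟨ψ, by simpa using comm⟩)]
  congr 1
  exact cocycleHom_cyclesMap P P' ψ z

end ExtComparison

section NaturalMap

open Limits Opposite

variable {I : Ideal R} {i : ℕ} {M : Type} [AddCommGroup M] [Module R M]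

lemma PhiSurj.exists_map_eq_map (h : PhiSurj I i M) {k : ℕ}
    (e : ((Ext R (ModuleCat R) i).obj (op (quotPow I k))).obj (ModuleCat.of R M)) :
    ∃ (l : ℕ) (hk : k ≤ l) (h1 : 1 ≤ l)
      (e₁ : ((Ext R (ModuleCat R) i).obj (op (quotPow I 1))).obj (ModuleCat.of R M)),
      ((Ext R (ModuleCat R) i).map (quotPowMap I hk).op).app (ModuleCat.of R M) e =
        ((Ext R (ModuleCat R) i).map (quotPowMap I h1).op).app (ModuleCat.of R M) e₁ := by
  let D := localCohomology.diagram (localCohomology.idealPowersDiagram I) i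
  have : HasColimit D := localCohomology.hasColimitDiagram.{0, 0} _ i
  let E := (evaluation (ModuleCat.{0} R) (ModuleCat.{0} R)).obj (ModuleCat.of R M)
  let c := E.mapCocone (colimit.cocone D)
  have hc : IsColimit c := isColimitOfPreserves E (colimit.isColimit D)
  obtain ⟨e₁, he₁⟩ := h (c.ι.app (op (op k)) e)
  have hrep : c.ι.app (op (op 1)) e₁ = c.ι.app (op (op k)) e := he₁
  obtain ⟨j, f, g, hfg⟩ := Concrete.isColimit_exists_of_rep_eq (D ⋙ E) hc _ _ hrep
  exact ⟨j.unop.unop, g.unop.unop.le, f.unop.unop.le, e₁, hfg.symm⟩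

lemma PhiSurj.extColimitSurjective (h : PhiSurj I i M) :
    ExtColimitSurjective I (ModuleCat.of R M) i := by
  intro k e
  let P (k : ℕ) := projectiveResolution (quotPow I k)
  obtain ⟨e, rfl⟩ := toAbelianExt_surjective (A := R) (P k) e
  obtain ⟨l, hk, h1, e₁, he⟩ := h.exists_map_eq_map e
  refine ⟨l, hk, h1, toAbelianExt (P 1) e₁, ?_⟩
  rw [extRes, extRes, ← toAbelianExt_map (P k) (P l), ← toAbelianExt_map (P 1) (P l), he]

end NaturalMap

section WeakElements

open Abelian

universe u

variable {A : Type u} [CommRing A] {I : Ideal A} {i : ℕ}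

/-- An element `x` is `I`-weak on `M` if `(0 :_M x) ⊆ (0 :_M I)`: the condition imposed on the first
term of an `I`-weak sequence. -/
def IsWeakElement (I : Ideal A) (M : Type*) [AddCommGroup M] [Module A M] (x : A) : Prop :=
  ∀ m : M, x • m = 0 → ∀ a ∈ I, a • m = 0

lemma ExtColimitSurjective.smul_eq_zero_of_pow {M : Type u} [AddCommGroup M] [Module A M]
    (h : ExtColimitSurjective I (ModuleCat.of A M) 0) {k : ℕ} {m : M}
    (hm : ∀ a ∈ I ^ k, a • m = 0) : ∀ a ∈ I, a • m = 0 := by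
  let f : A ⧸ I ^ k →ₗ[A] M := (I ^ k).liftQ (LinearMap.toSpanSingleton A M m) hm
  obtain ⟨l, hk, h1, e, he⟩ := h k (Ext.mk₀ (ModuleCat.ofHom f))
  obtain ⟨g, rfl⟩ := (Ext.mk₀_bijective _ _).2 e
  rw [extRes, extRes, Ext.mk₀_comp_mk₀, Ext.mk₀_comp_mk₀] at he
  have hfg : f 1 = g.hom (1 : A ⧸ I ^ 1) :=
    congr((ModuleCat.Hom.hom $((Ext.mk₀_bijective _ _).1 he)) (1 : A ⧸ I ^ l))
  have hf : f 1 = m := one_smul A m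
  intro a ha
  have hann : a ∈ Module.annihilator A (A ⧸ I ^ 1) := by rwa [Ideal.annihilator_quotient, pow_one]
  rw [← hf, hfg, ← map_smul, Module.mem_annihilator.1 hann, map_zero]

lemma exists_extRes_eq_comp_of_surjective [IsNoetherianRing A] {S : ShortComplex (ModuleCat.{u} A)}
    (hS : S.ShortExact) {n : ℕ} (hann : I ^ n ≤ Module.annihilator A S.X₁)
    (h : ExtColimitSurjective I S.X₂ i) {k : ℕ} (z : Ext (quotPow I k) S.X₃ i) :
    ∃ (l : ℕ) (hk : k ≤ l) (h1 : 1 ≤ l) (e : Ext (quotPow I 1) S.X₂ i),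
      extRes I hk z = extRes I h1 (e.comp (Ext.mk₀ S.g) (add_zero i)) := by
  obtain ⟨l, hl, hz⟩ := exists_extRes_eq_zero hann (z.comp hS.extClass rfl)
  rw [extRes_comp] at hz
  obtain ⟨w, hw⟩ := Ext.covariant_sequence_exact₃ _ hS (extRes I hl z) rfl hz
  obtain ⟨l', hl', h1, e, he⟩ := h l w
  exact ⟨l', hl.trans hl', h1, e, by
    rw [← extRes_extRes hl hl', ← hw, extRes_comp, he, ← extRes_comp]⟩

lemma ExtColimitSurjective.of_shortExact {S : ShortComplex (ModuleCat.{u} A)} (hS : S.ShortExact)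
    (h : ExtColimitSurjective I S.X₂ i)
    (hker : ∀ (k : ℕ) (z : Ext (quotPow I k) S.X₁ (i + 1)), ∃ (l : ℕ) (hk : k ≤ l) (h1 : 1 ≤ l)
      (e : Ext (quotPow I 1) S.X₁ (i + 1)),
        extRes I hk z = extRes I h1 e ∧ e.comp (Ext.mk₀ S.f) (add_zero (i + 1)) = 0) :
    ExtColimitSurjective I S.X₃ i := fun k y => by
  obtain ⟨l, hl, hl1, e, hye, he⟩ := hker k (y.comp hS.extClass rfl)
  obtain ⟨f, rfl⟩ := Ext.covariant_sequence_exact₁ _ hS e he rfl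
  have hdiff : (extRes I hl y - extRes I hl1 f).comp hS.extClass rfl = 0 := by
    rw [sub_eq_add_neg, Ext.add_comp, Ext.neg_comp, ← extRes_comp, ← extRes_comp, hye,
      add_neg_cancel]
  obtain ⟨g, hg⟩ := Ext.covariant_sequence_exact₃ _ hS _ rfl hdiff
  obtain ⟨m, hm, hm1, e', he'⟩ := h l g
  refine ⟨m, hl.trans hm, hm1, f + e'.comp (Ext.mk₀ S.g) (add_zero i), ?_⟩
  have hres := congrArg (extRes I hm) hg
  rw [extRes_sub, extRes_extRes, extRes_extRes, extRes_comp, he', ← extRes_comp] at hres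
  rw [extRes_add, hres, add_sub_cancel]

/- Multiplication by `x` factors as `M ↠ xM ↪ M` with kernel killed by `I`. So the classes with
values in `xM` eventually come from `M`, whence from `Ext(A ⧸ I, M)`, where `x` acts as zero. -/
lemma ExtColimitSurjective.quotSMulTop [IsNoetherianRing A] {M : Type u} [AddCommGroup M]
    [Module A M] {x : A} (hx : x ∈ I) (hxM : IsWeakElement I M x)
    (h : ExtColimitSurjective I (ModuleCat.of A M) i)
    (h' : ExtColimitSurjective I (ModuleCat.of A M) (i + 1)) :
    ExtColimitSurjective I (ModuleCat.of A (QuotSMulTop x M)) i := by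
  let q : M →ₗ[A] QuotSMulTop x M := Submodule.mkQ _
  have hq : Function.Surjective q := Submodule.mkQ_surjective _
  have hqx (m : M) : x • m ∈ q.ker := by
    rw [Submodule.ker_mkQ]
    exact Submodule.smul_mem_pointwise_smul m x ⊤ trivial
  let p : M →ₗ[A] q.ker := (LinearMap.lsmul A M x).codRestrict q.ker hqx
  have hp : Function.Surjective p := by
    rintro ⟨y, hy⟩
    rw [Submodule.ker_mkQ] at hy
    obtain ⟨m, -, hm⟩ := (Submodule.mem_smul_pointwise_iff_exists _ _ _).1 hy
    exact ⟨m, Subtype.ext hm⟩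
  have hann : I ^ 1 ≤ Module.annihilator A p.ker := fun a ha =>
    Module.mem_annihilator.2 fun m =>
      Subtype.ext (hxM m (congrArg Subtype.val m.2) a (by rwa [pow_one] at ha))
  refine .of_shortExact (LinearMap.shortExact_shortComplexKer hq) h fun k z => ?_
  obtain ⟨l, hk, h1, e, he⟩ := exists_extRes_eq_comp_of_surjective
    (LinearMap.shortExact_shortComplexKer hp) hann h' z
  refine ⟨l, hk, h1, _, he, ?_⟩
  rw [Ext.comp_assoc (a₂₃ := 0) _ _ _ (by lia) (by lia) (by lia), Ext.mk₀_comp_mk₀]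
  exact comp_mk₀_lsmul_eq_zero hx e

end WeakElements

section RelativeSystems

universe u

variable {A : Type u} [CommRing A] [IsNoetherianRing A] {I : Ideal A} {M : Type u} [AddCommGroup M]
  [Module A M]

lemma IsFilterRegular.isWeakElement_pow {y : A} (hy : IsFilterRegular I M y)
    (h : ExtColimitSurjective I (ModuleCat.of A M) 0) (t : ℕ) : IsWeakElement I M (y ^ t) :=
  fun _ hm =>
    have ⟨_, hk⟩ := hy.exists_pow_smul_eq_zero hm
    h.smul_eq_zero_of_pow hk

lemma IsWeakElement.of_le_radical {x : A}
    (hrad : I ≤ (Ideal.span {x} ⊔ Module.annihilator A M).radical)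
    (h : ExtColimitSurjective I (ModuleCat.of A M) 0) : IsWeakElement I M x := fun m hm => by
  obtain ⟨n, hn⟩ := Ideal.exists_pow_le_of_le_radical_of_fg hrad (IsNoetherian.noetherian I)
  have hker : Ideal.span {x} ⊔ Module.annihilator A M ≤ (LinearMap.toSpanSingleton A M m).ker :=
    sup_le ((Ideal.span_singleton_le_iff_mem _).2 hm) fun b hb => Module.mem_annihilator.1 hb m
  exact h.smul_eq_zero_of_pow (hn.trans hker)

lemma IsWeakElement.of_forall_quotSMulTop_pow [Module.Finite A M]
    (hjac : I ≤ (⊥ : Ideal A).jacobson) {x y : A} (hy : y ∈ I)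
    (h : ∀ t, IsWeakElement I (QuotSMulTop (y ^ (t + 1)) M) x) :
    IsWeakElement I M x := fun m hm a ha => by
  have hmem (t : ℕ) : a • m ∈ I ^ t • (⊤ : Submodule A M) := by
    let q : M →ₗ[A] QuotSMulTop (y ^ (t + 1)) M := Submodule.mkQ _
    have hq : q (a • m) = 0 := by
      rw [map_smul]
      exact h t (q m) (by rw [← map_smul, hm, map_zero]) a ha
    obtain ⟨m', -, hm'⟩ := (Submodule.mem_smul_pointwise_iff_exists _ _ _).1
      ((Submodule.Quotient.mk_eq_zero _).1 hq)
    rw [← hm']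
    exact Submodule.smul_mem_smul
      (Ideal.pow_le_pow_right t.le_succ (Ideal.pow_mem_pow hy (t + 1))) trivial
  rw [← Submodule.mem_bot A, ← Ideal.iInf_pow_smul_eq_bot_of_le_jacobson I hjac, Submodule.mem_iInf]
  exact hmem

/- Induction on `l`: modulo the other elements, the head of `l` can be changed into a filter regular
element `y`, whose powers are weak by surjectivity in degree `0`. The induction hypothesis applies
to every `M ⧸ y ^ t M`, and Krull's intersection theorem lifts the conclusion to `M`. -/
lemma isWeakElement_of_le_radical [Module.Finite A M] (hjac : I ≤ (⊥ : Ideal A).jacobson)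
    {x : A} (hx : x ∈ I) (l : List A) (hl : ∀ y ∈ l, y ∈ I)
    (hrad : I ≤ (Ideal.ofList (x :: l) ⊔ Module.annihilator A M).radical)
    (h : ∀ i ≤ l.length, ExtColimitSurjective I (ModuleCat.of A M) i) : IsWeakElement I M x := by
  induction l generalizing M with
  | nil =>
    rw [Ideal.ofList_singleton] at hrad
    exact .of_le_radical hrad (h 0 le_rfl)
  | cons b l ih =>
    obtain ⟨hb, hl⟩ := List.forall_mem_cons.1 hl
    have hJ : Ideal.ofList (x :: l) ≤ I := Ideal.span_le.2 (List.forall_mem_cons.2 ⟨hx, hl⟩)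
    rw [Ideal.ofList_cons, Ideal.ofList_cons, sup_left_comm, ← Ideal.ofList_cons] at hrad
    obtain ⟨j, hj, hreg⟩ := exists_add_isFilterRegular hrad
    have hy : b + j ∈ I := I.add_mem hb (hJ hj)
    refine .of_forall_quotSMulTop_pow hjac hy fun t => ?_
    exact ih hl (le_radical_sup_annihilator_quotSMulTop hj hrad (t + 1)) fun i hi =>
      .quotSMulTop (I.pow_mem_of_mem hy _ t.succ_pos)
        (hreg.isWeakElement_pow (h 0 (Nat.zero_le _)) (t + 1))
        (h i (Nat.le_succ_of_le hi)) (h (i + 1) (Nat.succ_le_succ hi))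

end RelativeSystems

section WeakSequences

variable {I : Ideal R} {M : Type} [AddCommGroup M] [Module R M] {c : ℕ}

lemma pSpan_zero (x : Fin (c + 1) → R) : pSpan M x 0 = ⊥ := by
  have hempty : x '' {j | j < 0} = ∅ := by
    simp only [Fin.not_lt_zero, Set.ofPred_false, Set.image_empty]
  rw [pSpan, hempty, Ideal.span_empty, Submodule.bot_smul]

lemma image_setOf_lt_succ {α : Type*} (x : Fin (c + 1) → α) (i : Fin c) :
    x '' {j | j < i.succ} = insert (x 0) ((fun j : Fin c => x j.succ) '' {j | j < i}) := by
  ext r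
  simp only [Set.mem_image, Set.mem_ofPred_eq, Set.mem_insert_iff, Fin.exists_fin_succ,
    Fin.succ_pos, true_and, Fin.succ_lt_succ_iff, eq_comm]

open scoped Pointwise in
lemma mem_pSpan_succ (x : Fin (c + 1) → R) (i : Fin c) (m : M) :
    m ∈ pSpan M x i.succ ↔
      (Submodule.Quotient.mk m : QuotSMulTop (x 0) M) ∈
        pSpan (QuotSMulTop (x 0) M) (fun j => x j.succ) i := by
  let N : Submodule R M := x 0 • ⊤
  have hmap (J : Ideal R) :
      J • (⊤ : Submodule R (M ⧸ N)) = (J • (⊤ : Submodule R M)).map N.mkQ := by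
    rw [Submodule.map_smul'', Submodule.map_top, Submodule.range_mkQ]
  rw [pSpan, pSpan, image_setOf_lt_succ, Ideal.span_insert, Submodule.sup_smul,
    Submodule.ideal_span_singleton_smul, hmap, ← Submodule.mkQ_apply, ← Submodule.mem_comap,
    Submodule.comap_map_mkQ]

lemma isWeakSeq_succ {x : Fin (c + 1) → R} (h0 : IsWeakElement I M (x 0))
    (hsucc : IsWeakSeq I (QuotSMulTop (x 0) M) fun j => x j.succ) : IsWeakSeq I M x := by
  intro i m hm a ha
  cases i using Fin.cases with
  | zero =>
    rw [pSpan_zero, Submodule.mem_bot] at hm ⊢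
    exact h0 m hm a ha
  | succ i =>
    rw [mem_pSpan_succ, Submodule.Quotient.mk_smul] at hm ⊢
    exact hsucc i _ hm a ha

lemma isWeakSeq_of_le_radical [IsNoetherianRing R] [Module.Finite R M]
    (hjac : I ≤ (⊥ : Ideal R).jacobson) {x : Fin c → R} (hx : ∀ j, x j ∈ I)
    (hrad : I ≤ (Ideal.span (Set.range x) ⊔ Module.annihilator R M).radical)
    (h : ∀ i < c, ExtColimitSurjective I (ModuleCat.of R M) i) : IsWeakSeq I M x := by
  induction c generalizing M with
  | zero => exact fun i => i.elim0
  | succ c ih =>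
    have h0 : IsWeakElement I M (x 0) := by
      refine isWeakElement_of_le_radical hjac (hx 0) (List.ofFn fun j : Fin c => x j.succ)
        (List.forall_mem_ofFn_iff.2 fun j => hx j.succ) ?_ fun i hi =>
          h i (Nat.lt_succ_of_le (hi.trans_eq List.length_ofFn))
      have hofFn : Ideal.ofList (List.ofFn x) = Ideal.span (Set.range x) :=
        congrArg Ideal.span (Set.ext (List.mem_ofFn' x))
      rwa [← List.ofFn_succ, hofFn]
    refine isWeakSeq_succ h0 (ih (fun j => hx j.succ) ?_ fun i hi =>
      .quotSMulTop (hx 0) h0 (h i (Nat.lt_succ_of_lt hi)) (h (i + 1) (Nat.succ_lt_succ hi)))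
    rw [Fin.range_fin_succ, Ideal.span_insert, sup_comm (Ideal.span {x 0}), sup_assoc] at hrad
    exact hrad.trans (Ideal.radical_mono
      (sup_le_sup_left (span_singleton_sup_annihilator_le_annihilator_quotSMulTop _) _))

end WeakSequences

/-- **Corollary 4.3(ii).** If `I` is contained in the Jacobson radical of `R` and `M` is an
`I`-relative surjective Buchsbaum module with `cd(I,M) = ara(I,M)`, then `M` is `I`-relative
Buchsbaum. -/
theorem corollary_4_3_ii [IsNoetherianRing R] (I : Ideal R)
    (hjac : I ≤ (⊥ : Ideal R).jacobson)
    (M : Type) [AddCommGroup M] [Module R M] [Module.Finite R M]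
    (hsb : IsRelSurjBuchsbaum I M)
    (c : ℕ) (hc : IsCd I M c) (ha : IsAra I M c) :
    IsRelBuchsbaum I M := by
  refine ⟨c, hc, ha, fun x hx => ?_⟩
  exact isWeakSeq_of_le_radical hjac hx.1 ((le_sup_left.trans Ideal.le_radical).trans hx.2.ge)
    fun i hi => (hsb i ⟨c, hi, hc.1⟩).extColimitSurjective
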